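/- For all integers j ≥ i ≥ k ≥ 0 and l ≥ 0, the quantum binomial identity [j+k choose i]·[i+l choose k] = Σ_{m=0}^{i} [l choose k−m]·[j+l+m choose m]·[j choose i−m] holds in the field ℚ(t) of rational functions. (This is the consistency identity, obtained from the top attachment s = i, that the coefficients a(i,m) = [l choose k−m] of the rectangular relations of the quantum sl(n) web space must satisfy.) -/

import Mathlib

/-- The quantum integer `[m] = (t^m - t^(-m))/(t - t⁻¹)` in the field `ℚ(t)`. -/
noncomputable def qint (m : ℤ) : RatFunc ℚ :=
  (RatFunc.X ^ m - RatFunc.X ^ (-m)) / (RatFunc.X - RatFunc.X⁻¹)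

/-- The quantum factorial `[m]! = [m][m-1]⋯[2][1]`, with `[0]! = 1`. -/
noncomputable def qfact (m : ℕ) : RatFunc ℚ :=
  ∏ i ∈ Finset.range m, qint (i + 1)

/-- The quantum binomial coefficient `[a choose b] = [a]!/([a-b]![b]!)` when `0 ≤ b ≤ a`,
and `0` when `b < 0` or `b > a`. -/
noncomputable def qbinom (a b : ℤ) : RatFunc ℚ :=
  if 0 ≤ b ∧ b ≤ a then qfact a.toNat / (qfact (a - b).toNat * qfact b.toNat) else 0

theorem xne : (RatFunc.X : RatFunc ℚ) ≠ 0 := RatFunc.X_ne_zero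

theorem xpow_ne (n : ℤ) (hn : 0 < n) :
    (RatFunc.X : RatFunc ℚ) ^ n - RatFunc.X ^ (-n) ≠ 0 := by
  intro h
  have h0 := xne
  lift n to ℕ using hn.le
  have h1 : (RatFunc.X : RatFunc ℚ) ^ (2 * n) = 1 := by
    rw [zpow_neg, zpow_natCast, sub_eq_zero] at h
    rw [two_mul, pow_add]
    nth_rewrite 1 [h]
    exact inv_mul_cancel₀ (pow_ne_zero _ h0)
  rw [← RatFunc.algebraMap_X, ← map_pow, ← map_one (algebraMap (Polynomial ℚ) (RatFunc ℚ))] at h1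
  have h2 := RatFunc.algebraMap_injective ℚ h1
  have h3 := congrArg Polynomial.natDegree h2
  rw [Polynomial.natDegree_X_pow, Polynomial.natDegree_one] at h3
  omega

theorem den_ne : (RatFunc.X : RatFunc ℚ) - RatFunc.X⁻¹ ≠ 0 := by
  have := xpow_ne 1 one_pos
  simpa using this

theorem qint_ne (n : ℤ) (hn : 0 < n) : qint n ≠ 0 := div_ne_zero (xpow_ne n hn) den_ne

theorem qint_zero : qint 0 = 0 := by simp [qint]

theorem qfact_ne (n : ℕ) : qfact n ≠ 0 :=
  Finset.prod_ne_zero_iff.2 fun i _ => qint_ne _ (by positivity)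

theorem qfact_succ (n : ℕ) : qfact (n + 1) = qfact n * qint (n + 1) :=
  Finset.prod_range_succ _ _

theorem qfact_zero : qfact 0 = 1 := rfl

theorem qbinom_nat (c b : ℕ) :
    qbinom ((c : ℤ) + b) b = qfact (c + b) / (qfact c * qfact b) := by
  unfold qbinom
  rw [if_pos (by omega)]
  have h1 : ((c : ℤ) + b).toNat = c + b := by omega
  have h2 : ((c : ℤ) + b - b).toNat = c := by omega
  rw [h1, h2, Int.toNat_natCast]

theorem qbinom_out (a b : ℤ) (h : b < 0 ∨ a < b) : qbinom a b = 0 := by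
  unfold qbinom
  rw [if_neg (by omega)]

theorem qbinom_self (a : ℤ) (h : 0 ≤ a) : qbinom a a = 1 := by
  lift a to ℕ using h
  have := qbinom_nat 0 a
  simp only [Nat.cast_zero, zero_add, qfact_zero, one_mul] at this
  rw [this, div_self (qfact_ne _)]

theorem qbinom_zero (a : ℤ) (h : 0 ≤ a) : qbinom a 0 = 1 := by
  lift a to ℕ using h
  have := qbinom_nat a 0
  simp only [Nat.cast_zero, add_zero, qfact_zero, mul_one] at this
  rw [this, div_self (qfact_ne _)]

theorem rec3 (a b : ℤ) (ha : 0 ≤ a) :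
    qbinom (a + 1) b * qint (a + 1 - b) = qint (a + 1) * qbinom a b := by
  rcases lt_or_ge b 0 with hb | hb
  · rw [qbinom_out _ _ (Or.inl hb), qbinom_out _ _ (Or.inl hb)]; simp
  rcases lt_trichotomy b (a + 1) with h | h | h
  · obtain ⟨c, rfl⟩ : ∃ c : ℕ, a = c + b := ⟨(a - b).toNat, by omega⟩
    lift b to ℕ using hb
    have e := qbinom_nat (c + 1) b
    have e1 : ((c + 1 : ℕ) : ℤ) + b = (c : ℤ) + b + 1 := by push_cast; ring
    have e2 : c + 1 + b = (c + b) + 1 := by ring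
    have e3 : (c : ℤ) + b + 1 - b = c + 1 := by ring
    rw [e1, e2] at e
    rw [e, qbinom_nat, e3, qfact_succ, qfact_succ]
    have := qfact_ne c
    have := qfact_ne b
    have := qint_ne (c + 1) (by positivity)
    push_cast
    field_simp
  · subst h
    rw [qbinom_out a _ (by omega)]; simp [qint_zero]
  · rw [qbinom_out a _ (by omega), qbinom_out _ _ (by omega)]; simp

theorem rec2 (a b : ℤ) (ha : 0 ≤ a) :
    qbinom (a + 1) b * qint b = qint (a + 1) * qbinom a (b - 1) := by
  rcases lt_trichotomy b 0 with hb | hb | hb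
  · rw [qbinom_out _ _ (Or.inl hb), qbinom_out _ _ (by omega)]; simp
  · subst hb
    rw [qbinom_out a _ (by omega)]; simp [qint_zero]
  rcases lt_or_ge (a + 1) b with h | h
  · rw [qbinom_out _ _ (by omega), qbinom_out _ _ (by omega)]; simp
  obtain ⟨d, rfl⟩ : ∃ d : ℕ, b = d + 1 := ⟨(b - 1).toNat, by omega⟩
  obtain ⟨c, rfl⟩ : ∃ c : ℕ, a = c + d := ⟨(a - d).toNat, by omega⟩
  have e := qbinom_nat c (d + 1)
  have e1 : (c : ℤ) + ((d + 1 : ℕ) : ℤ) = (c : ℤ) + d + 1 := by push_cast; ring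
  have e2 : c + (d + 1) = (c + d) + 1 := by ring
  have e3 : ((d : ℤ) + 1 - 1) = d := by ring
  rw [e1, e2] at e
  push_cast at e
  rw [e, e3, qbinom_nat, qfact_succ, qfact_succ]
  have := qfact_ne c
  have := qfact_ne d
  have := qint_ne (d + 1) (by positivity)
  push_cast
  field_simp

theorem rec1 (a b : ℤ) (ha : 0 ≤ a) :
    qbinom a (b - 1) * qint (a - b + 1) = qbinom a b * qint b := by
  have h2 := rec2 a b ha
  have h3 := rec3 a b ha
  have h := qint_ne (a + 1) (by omega)
  rw [show a - b + 1 = a + 1 - b by ring]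
  apply mul_left_cancel₀ h
  linear_combination (-qint (a + 1 - b)) * h2 + qint b * h3

theorem qid (i j k L m : ℤ) :
    qint (i + L - k) * qint L * qint (j + L + m) - qint (i + L) * qint (L - k + m) * qint (j + L)
    = qint (k - m) * qint (j + L + m) * qint (i - m) - qint m * qint (j - i + m) * qint (L - k + m)
    := by
  have h0 := xne
  have hd := den_ne
  unfold qint
  generalize (RatFunc.X - RatFunc.X⁻¹ : RatFunc ℚ) = d at *
  simp only [neg_sub, neg_add_rev, zpow_add₀ h0, zpow_sub₀ h0, zpow_neg]
  have := zpow_ne_zero i h0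
  have := zpow_ne_zero j h0
  have := zpow_ne_zero k h0
  have := zpow_ne_zero L h0
  have := zpow_ne_zero m h0
  generalize (RatFunc.X : RatFunc ℚ) ^ i = a at *
  generalize (RatFunc.X : RatFunc ℚ) ^ j = b at *
  generalize (RatFunc.X : RatFunc ℚ) ^ k = c at *
  generalize (RatFunc.X : RatFunc ℚ) ^ L = e at *
  generalize (RatFunc.X : RatFunc ℚ) ^ m = f at *
  field_simp
  ring

noncomputable def TT (i j k l m : ℤ) : RatFunc ℚ :=
  qbinom l (k - m) * qbinom (j + l + m) m * qbinom j (i - m)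

theorem step (i j k l m : ℤ) (hj : 0 ≤ j) (hl : 0 ≤ l) (hm : 0 ≤ m) :
    qint (j + l + 1) * (qint (i + (l + 1) - k) * TT i j k (l + 1) m
      - qint (i + (l + 1)) * TT i j k l m)
    = qint (m + 1) * qint (j - i + (m + 1)) * TT i j k l (m + 1)
      - qint m * qint (j - i + m) * TT i j k l m := by
  unfold TT
  have q := qid i j k (l + 1) m
  have r1 := rec2 l (k - m) hl
  have r2 := rec1 l (k - m) hl
  have r3 := rec1 j (i - m) hj
  have r4 := rec2 (j + l + m) (m + 1) (by omega)
  have r5 := rec3 (j + l + m) m (by omega)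
  rw [show k - (m + 1) = k - m - 1 by ring, show i - (m + 1) = i - m - 1 by ring,
    show j + l + (m + 1) = j + l + m + 1 by ring, show j + (l + 1) + m = j + l + m + 1 by ring,
    show j - i + (m + 1) = j - (i - m) + 1 by ring]
  rw [show j + l + m + 1 - m = j + l + 1 by ring] at r5
  rw [show m + 1 - 1 = m by ring] at r4
  rw [show l - (k - m) + 1 = l + 1 - k + m by ring] at r2
  rw [show j + (l + 1) + m = j + l + m + 1 by ring, show j + (l + 1) = j + l + 1 by ring] at q
  generalize qbinom (j + l + m + 1) (m + 1) = P1 at *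
  generalize qbinom (j + l + m + 1) m = P2 at *
  generalize qbinom (j + l + m) m = P at *
  generalize qbinom j (i - m - 1) = J1 at *
  generalize qbinom j (i - m) = J at *
  suffices H : qint (i + (l + 1) - k) * qbinom (l + 1) (k - m) * qint (j + l + m + 1)
      - qint (i + (l + 1)) * qbinom l (k - m) * qint (j + l + 1)
      = qbinom l (k - m - 1) * qint (j + l + m + 1) * qint (i - m)
       - qint m * qint (j - i + m) * qbinom l (k - m) by
    linear_combination P * J * H + qint (i + (l + 1) - k) * qbinom (l + 1) (k - m) * J * r5
      - qbinom l (k - m - 1) * J1 * qint (j - (i - m) + 1) * r4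
      - qbinom l (k - m - 1) * P * qint (j + l + m + 1) * r3
  rcases lt_trichotomy (k - m) 0 with h | h | h
  · rw [qbinom_out _ _ (Or.inl h), qbinom_out _ _ (Or.inl h), qbinom_out _ (k - m - 1) (by omega)]
    simp
  · obtain rfl : k = m := by omega
    rw [qbinom_out _ (k - k - 1) (by omega), sub_self, qbinom_zero _ hl, qbinom_zero _ (by omega)]
    rw [sub_self, qint_zero, show l + 1 - k + k = l + 1 by ring] at q
    apply mul_left_cancel₀ (qint_ne (l + 1) (by omega))
    linear_combination q
  · apply mul_left_cancel₀ (qint_ne (k - m) h)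
    linear_combination qbinom l (k - m - 1) * q
      + qint (i + (l + 1) - k) * qint (j + l + m + 1) * r1
      + (qint (i + (l + 1)) * qint (j + l + 1) - qint m * qint (j - i + m)) * r2

theorem base (i j k : ℤ) (hji : i ≤ j) (hik : k ≤ i) (hk : 0 ≤ k) :
    qbinom (j + k) i * qbinom i k = qbinom (j + k) k * qbinom j (i - k) := by
  lift k to ℕ using hk
  obtain ⟨p, rfl⟩ : ∃ p : ℕ, i = p + k := ⟨(i - k).toNat, by omega⟩
  obtain ⟨q, rfl⟩ : ∃ q : ℕ, j = q + p := by
    exact ⟨(j - p).toNat, by omega⟩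
  have a1 := qbinom_nat q (p + k)
  have a2 := qbinom_nat (q + p) k
  push_cast at a1 a2
  rw [show (q : ℤ) + (p + k) = q + p + k by ring] at a1
  rw [a1, a2, show (p : ℤ) + k - k = p by ring, qbinom_nat, qbinom_nat,
    show q + (p + k) = q + p + k by ring]
  have := qfact_ne p
  have := qfact_ne q
  have := qfact_ne k
  have := qfact_ne (p + k)
  have := qfact_ne (q + p)
  field_simp

theorem rectangular_consistency (i j k l : ℤ)
    (hji : i ≤ j) (hik : k ≤ i) (hk : 0 ≤ k) (hl : 0 ≤ l) :
    qbinom (j + k) i * qbinom (i + l) k =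
      ∑ m ∈ Finset.range (i.toNat + 1),
        qbinom l (k - (m : ℤ)) * qbinom (j + l + (m : ℤ)) (m : ℤ) * qbinom j (i - (m : ℤ)) := by
  induction l, hl using Int.le_induction with
  | base =>
    rw [Finset.sum_eq_single k.toNat]
    · rw [Int.toNat_of_nonneg hk, sub_self, qbinom_zero 0 le_rfl, add_zero, add_zero, one_mul]
      exact base i j k hji hik hk
    · intro m _ hm
      rw [qbinom_out 0 _ (by omega)]; simp
    · intro h
      exact absurd (Finset.mem_range.2 (by omega)) h
  | succ l hl ih =>
    have tel := Finset.sum_range_sub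
      (fun m : ℕ => qint m * qint (j - i + m) * TT i j k l m) (i.toNat + 1)
    have h0 : TT i j k l ((i.toNat + 1 : ℕ) : ℤ) = 0 := by
      unfold TT
      rw [qbinom_out j _ (by omega)]; simp
    have e : ∀ m ∈ Finset.range (i.toNat + 1), _ := fun m _ =>
      step i j k l (m : ℤ) (by omega) hl (by positivity)
    have s := Finset.sum_congr rfl e
    simp only [h0, Nat.cast_zero, qint_zero, Nat.cast_add, Nat.cast_one] at tel
    rw [tel, ← Finset.mul_sum, Finset.sum_sub_distrib, ← Finset.mul_sum, ← Finset.mul_sum] at s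
    change _ = ∑ m ∈ Finset.range (i.toNat + 1), TT i j k l (m : ℤ) at ih
    change _ = ∑ m ∈ Finset.range (i.toNat + 1), TT i j k (l + 1) (m : ℤ)
    rw [← ih] at s
    have s2 := (mul_eq_zero.1 (s.trans (by
      have := h0
      push_cast at this
      rw [this]; ring))).resolve_left (qint_ne _ (by omega))
    have r := rec3 (i + l) k (by omega)
    rw [show i + l + 1 = i + (l + 1) by ring] at r
    apply mul_left_cancel₀ (qint_ne (i + (l + 1) - k) (by omega))
    linear_combination qbinom (j + k) i * r - s2
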